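/- Let F : X → L be a single-label classifier into a finite label type L, M a finite nonempty set of masks, x ∈ X, y ∈ L, and m* ∈ M a mask with the row-robustness property F((x ∘ m*) ∘ m) = y for every m ∈ M. Then for every patch region r covered by m* and every adversarial content x'' ∈ X, the double-masking inference procedure is correct on the attacked image: DoubleMaskingInfer(F, M, patch(x,r,x'')) = y. (Lemma 2: validity of the per-mask vulnerability status array returned by the double-masking certification procedure.) -/

import Mathlib

/-- Images with width `w`, height `h`, and `γ` channels. -/
abbrev Img (w h γ : ℕ) := Fin w → Fin h → Fin γ → ℝ

/-- The patched image: pixels inside the patch region (`r i j = false`) are replaced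
by adversarial content `x''`. -/
def patch {w h γ : ℕ} (x : Img w h γ) (r : Fin w → Fin h → Bool) (x'' : Img w h γ) :
    Img w h γ :=
  fun i j k => if r i j then x i j k else x'' i j k

/-- Masking an image: occluded pixels (`m i j = false`) are set to `0`. -/
def maskImg {w h γ : ℕ} (x : Img w h γ) (m : Fin w → Fin h → Bool) : Img w h γ :=
  fun i j k => if m i j then x i j k else 0

noncomputable section
open scoped Classical

/-- Iterate over a list of (disagreer) masks in order; for the first one whose
second-round predictions all agree (consensus), return its first-round prediction. -/
def firstConsensus {w h γ : ℕ} {L : Type*} (F : Img w h γ → L)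
    (M : Finset (Fin w → Fin h → Bool)) (x : Img w h γ) :
    List (Fin w → Fin h → Bool) → Option L
  | [] => none
  | m :: rest =>
      if ∀ m₁ ∈ M, ∀ m₂ ∈ M,
          F (maskImg (maskImg x m) m₁) = F (maskImg (maskImg x m) m₂) then
        some (F (maskImg x m))
      else firstConsensus F M x rest

/-- A label attaining the maximum multiplicity among the first-round masked
predictions (ties broken by a fixed rule). -/
def majLabel {w h γ : ℕ} {L : Type*} [Nonempty L] (F : Img w h γ → L)
    (M : Finset (Fin w → Fin h → Bool)) (x : Img w h γ) : L :=
  if hM : M.Nonempty then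
    Classical.choose ((M.image fun m => F (maskImg x m)).exists_max_image
      (fun l => (M.filter fun m => F (maskImg x m) = l).card) (hM.image _))
  else Classical.arbitrary L

/-- PatchCleanser's double-masking inference procedure: return the first-round majority
label if there are no disagreers; otherwise iterate over the disagreers in a fixed
order, returning the first-round prediction of the first disagreer achieving
second-round consensus; if none does, return the majority label. -/
def DoubleMaskingInfer {w h γ : ℕ} {L : Type*} [Nonempty L] (F : Img w h γ → L)
    (M : Finset (Fin w → Fin h → Bool)) (x : Img w h γ) : L :=
  let ymaj := majLabel F M x
  let D := M.filter fun m => F (maskImg x m) ≠ ymaj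
  match firstConsensus F M x D.toList with
  | some l => l
  | none => ymaj

theorem firstConsensus_aux {w h γ : ℕ} {L : Type*} (F : Img w h γ → L)
    (M : Finset (Fin w → Fin h → Bool)) (x : Img w h γ) (l : List (Fin w → Fin h → Bool)) :
    (firstConsensus F M x l = none ∧ ∀ m ∈ l, ¬ ∀ m₁ ∈ M, ∀ m₂ ∈ M,
          F (maskImg (maskImg x m) m₁) = F (maskImg (maskImg x m) m₂)) ∨
    (∃ m ∈ l, firstConsensus F M x l = some (F (maskImg x m)) ∧ ∀ m₁ ∈ M, ∀ m₂ ∈ M,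
          F (maskImg (maskImg x m) m₁) = F (maskImg (maskImg x m) m₂)) := by
  induction l with
  | nil => left; simp [firstConsensus]
  | cons a t ih =>
    by_cases hc : ∀ m₁ ∈ M, ∀ m₂ ∈ M,
          F (maskImg (maskImg x a) m₁) = F (maskImg (maskImg x a) m₂)
    · right
      exact ⟨a, by simp, by rw [firstConsensus, if_pos hc], hc⟩
    · have e : firstConsensus F M x (a :: t) = firstConsensus F M x t := by
        rw [firstConsensus, if_neg hc]
      rw [e]
      rcases ih with ⟨h1, h2⟩ | ⟨m, hm, h1, h2⟩
      · left
        refine ⟨h1, fun m hm => ?_⟩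
        rcases List.mem_cons.1 hm with rfl | hm
        · exact hc
        · exact h2 m hm
      · right
        exact ⟨m, List.mem_cons_of_mem _ hm, h1, h2⟩

theorem maskImg_idem {w h γ : ℕ} (x : Img w h γ) (m : Fin w → Fin h → Bool) :
    maskImg (maskImg x m) m = maskImg x m := by
  funext i j k
  simp only [maskImg]
  split_ifs <;> rfl

theorem maskImg_comm {w h γ : ℕ} (x : Img w h γ) (m n : Fin w → Fin h → Bool) :
    maskImg (maskImg x m) n = maskImg (maskImg x n) m := by
  funext i j k
  simp only [maskImg]
  split_ifs <;> rfl

/-- Lemma 2 (validity of the per-mask vulnerability status array returned by the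
double-masking certification procedure): if mask `m* ∈ M` has the row-robustness
property `F((x ∘ m*) ∘ m) = y` for every `m ∈ M`, then double-masking inference is
correct on any image attacked inside a patch region covered by `m*`. -/
theorem vulnerability_status_valid {w h γ : ℕ} {L : Type*} [Fintype L] [Nonempty L]
    (F : Img w h γ → L) (M : Finset (Fin w → Fin h → Bool)) (hM : M.Nonempty)
    (mstar : Fin w → Fin h → Bool) (hmstar : mstar ∈ M)
    (x : Img w h γ) (y : L)
    (hrow : ∀ m ∈ M, F (maskImg (maskImg x mstar) m) = y) :
    ∀ r : Fin w → Fin h → Bool, (∀ i j, mstar i j = true → r i j = true) →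
      ∀ x'' : Img w h γ, DoubleMaskingInfer F M (patch x r x'') = y := by
  intro r hr x''
  have hp : maskImg (patch x r x'') mstar = maskImg x mstar := by
    funext i j k
    by_cases hm : mstar i j = true
    · simp [maskImg, patch, hm, hr i j hm]
    · simp [maskImg, hm]
  rw [← hp] at hrow
  generalize patch x r x'' = z at hrow
  have key : ∀ m ∈ M, (∀ m₁ ∈ M, ∀ m₂ ∈ M,
      F (maskImg (maskImg z m) m₁) = F (maskImg (maskImg z m) m₂)) → F (maskImg z m) = y := by
    intro m hm hc
    have h1 := hc m hm mstar hmstar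
    rw [maskImg_idem, maskImg_comm, hrow m hm] at h1
    exact h1
  have hs : F (maskImg z mstar) = y := by
    have := hrow mstar hmstar
    rwa [maskImg_idem] at this
  unfold DoubleMaskingInfer
  rcases firstConsensus_aux F M z
    (M.filter fun m => F (maskImg z m) ≠ majLabel F M z).toList with ⟨h1, h2⟩ | ⟨m, hm, h1, h2⟩
  · simp only [h1]
    by_contra hne
    refine h2 mstar ?_ ?_
    · rw [Finset.mem_toList, Finset.mem_filter]
      exact ⟨hmstar, fun e => hne (e.symm.trans hs)⟩
    · intro m₁ h₁ m₂ h₂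
      rw [hrow m₁ h₁, hrow m₂ h₂]
  · simp only [h1]
    rw [Finset.mem_toList, Finset.mem_filter] at hm
    exact key m hm.1 h2

end
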